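/- arXiv:1708.04309 — 2 statements merged into one kernel-verified Lean document; each statement's English description precedes it below -/
import Mathlib

section
/- Let κ ≥ 1. There exists a constant C > 0, depending only on κ, with the following property. Let (X,d) be a proper geodesic metric space, ν a Radon measure on X, z ∈ X, s > 0 and δ > 0. Let F : X → [0,∞) be a Borel function satisfying (1/ν(B_s(z))) ∫_{B_s(z)} F dν ≤ δ, and assume 0 < ν(B_{2t}(w)) ≤ 2^κ ν(B_t(w)) for every w ∈ B_s(z) and every 0 < t ≤ s. Then there exists a compact set K ⊆ \bar B_{s/100}(z) with ν(K) ≥ (1 − C√δ) · ν(B_{s/100}(z)) such that for every x ∈ K and every 0 < t ≤ s/100 one has (1/ν(B_t(x))) ∫_{B_t(x)} F dν ≤ C√δ. -/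
open MeasureTheory Metric
open scoped ENNReal

/-- The telescope lemma (Lemma 3.1): on a proper geodesic metric space with a Radon
measure which is locally doubling on a ball `B_s(z)`, if a nonnegative Borel function
has small mean over `B_s(z)`, then on a compact subset of `\bar B_{s/100}(z)` of nearly
full measure, all means of the function over small balls are small. -/
theorem telescope_lemma (κ : ℝ) (hκ : 1 ≤ κ) :
    ∃ C : ℝ, 0 < C ∧
      ∀ (X : Type) [MetricSpace X] [MeasurableSpace X] [BorelSpace X] [ProperSpace X],
        (∀ x y : X, ∃ γ : ℝ → X, γ 0 = x ∧ γ (dist x y) = y ∧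
            ∀ s ∈ Set.Icc (0 : ℝ) (dist x y), ∀ t ∈ Set.Icc (0 : ℝ) (dist x y),
              dist (γ s) (γ t) = |s - t|) →
        ∀ (ν : Measure X), IsFiniteMeasureOnCompacts ν →
        ∀ (z : X) (s δ : ℝ), 0 < s → 0 < δ →
        ∀ F : X → ℝ≥0∞, Measurable F →
        (∫⁻ x in ball z s, F x ∂ν) ≤ ENNReal.ofReal δ * ν (ball z s) →
        (∀ w ∈ ball z s, ∀ t : ℝ, 0 < t → t ≤ s →
          0 < ν (ball w (2 * t)) ∧
            ν (ball w (2 * t)) ≤ ENNReal.ofReal (2 ^ κ) * ν (ball w t)) →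
        ∃ K : Set X, K ⊆ closedBall z (s / 100) ∧ IsCompact K ∧
          ENNReal.ofReal (1 - C * Real.sqrt δ) * ν (ball z (s / 100)) ≤ ν K ∧
          ∀ x ∈ K, ∀ t : ℝ, 0 < t → t ≤ s / 100 →
            (∫⁻ y in ball x t, F y ∂ν) ≤
              ENNReal.ofReal (C * Real.sqrt δ) * ν (ball x t) := by
  have hp : (1:ℝ) ≤ 2 ^ κ := Real.one_le_rpow (by norm_num) (by linarith)
  refine ⟨(2 ^ κ) ^ 9, by positivity, ?_⟩
  intro X _ _ _ _ _ ν hν z s δ hs hδ F hF hint hdoub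
  set A : ℝ≥0∞ := ENNReal.ofReal (2 ^ κ) with hA
  set d : ℝ≥0∞ := ENNReal.ofReal (Real.sqrt δ) with hd
  have hd0 : d ≠ 0 := by
    rw [hd]; simpa using hδ
  have hdt : d ≠ ⊤ := ENNReal.ofReal_ne_top
  have hdd : ENNReal.ofReal δ = d * d := by
    rw [hd, ← ENNReal.ofReal_mul (Real.sqrt_nonneg _), Real.mul_self_sqrt hδ.le]
  have hC : ENNReal.ofReal ((2 ^ κ) ^ 9 * Real.sqrt δ) = A ^ 9 * d := by
    rw [ENNReal.ofReal_mul (by positivity), ENNReal.ofReal_pow (by positivity)]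
  have hA1 : 1 ≤ A := by
    rw [hA]; exact ENNReal.one_le_ofReal.2 hp
  -- bad set
  let T : Set (X × ℝ) := {p | p.1 ∈ closedBall z (s / 100) ∧ 0 < p.2 ∧ p.2 ≤ s / 100 ∧
    d * ν (ball p.1 p.2) ≤ ∫⁻ y in ball p.1 p.2, F y ∂ν}
  let U : Set X := ⋃ p ∈ T, ball p.1 p.2
  have hUo : IsOpen U := isOpen_biUnion fun p _ => isOpen_ball
  set M := ν (ball z (s / 100)) with hM
  have hMt : M ≠ ⊤ := measure_ball_lt_top.ne
  have hz : ∀ n : ℕ, ν (ball z s) ≤ A ^ n * ν (ball z (s / 2 ^ n)) := by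
    intro n
    induction n with
    | zero => simp
    | succ n ih =>
      have h1 : s / 2 ^ (n + 1) ≤ s := div_le_self hs.le (one_le_pow₀ (by norm_num))
      have h := (hdoub z (mem_ball_self hs) (s / 2 ^ (n + 1)) (by positivity) h1).2
      have e : 2 * (s / 2 ^ (n + 1)) = s / 2 ^ n := by
        rw [pow_succ]; field_simp
      rw [e] at h
      calc ν (ball z s) ≤ A ^ n * ν (ball z (s / 2 ^ n)) := ih
        _ ≤ A ^ n * (A * ν (ball z (s / 2 ^ (n + 1)))) := by gcongr
        _ = _ := by rw [pow_succ A, mul_assoc]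
  have hzM : ν (ball z s) ≤ A ^ 7 * M := by
    refine (hz 7).trans ?_
    gcongr
    refine measure_mono (ball_subset_ball ?_)
    rw [div_le_div_iff₀ (by positivity) (by norm_num)]
    nlinarith
  have hU : ν U ≤ A ^ 9 * d * M := by
    obtain ⟨u, huT, hdis, hcov⟩ :=
      Vitali.exists_disjoint_subfamily_covering_enlargement_ball T (fun p => p.1)
        (fun p => p.2) (s / 100) (fun p hp => hp.2.2.1) 4 (by norm_num)
    have huc : u.Countable := hdis.countable_of_isOpen (fun p _ => isOpen_ball)
      (fun p hp => ⟨p.1, mem_ball_self (huT hp).2.1⟩)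
    have hsub : U ⊆ ⋃ p ∈ u, ball p.1 (4 * p.2) := by
      refine Set.iUnion₂_subset fun p hp => ?_
      obtain ⟨b, hb, h⟩ := hcov p hp
      exact h.trans (Set.subset_biUnion_of_mem (u := fun q : X × ℝ => ball q.1 (4 * q.2)) hb)
    have hball : ∀ p ∈ u, d * ν (ball p.1 (4 * p.2)) ≤ A ^ 2 * ∫⁻ y in ball p.1 p.2, F y ∂ν := by
      intro p hp
      obtain ⟨h1, h2, h3, h4⟩ := huT hp
      have hps : p.1 ∈ ball z s := by
        rw [mem_closedBall] at h1; rw [mem_ball]; linarith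
      have a1 := (hdoub p.1 hps p.2 h2 (by linarith)).2
      have a2 := (hdoub p.1 hps (2 * p.2) (by linarith) (by linarith)).2
      have e : 2 * (2 * p.2) = 4 * p.2 := by ring
      rw [e] at a2
      calc d * ν (ball p.1 (4 * p.2)) ≤ d * (A * (A * ν (ball p.1 p.2))) := by
            gcongr
            exact a2.trans (by gcongr)
        _ = A ^ 2 * (d * ν (ball p.1 p.2)) := by ring
        _ ≤ _ := by gcongr
    have key : d * ν U ≤ d * (A ^ 9 * d * M) := by
      have := huc.to_subtype
      calc d * ν U ≤ d * ∑' p : u, ν (ball p.1.1 (4 * p.1.2)) := by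
            gcongr
            exact (measure_mono hsub).trans (measure_biUnion_le ν huc _)
        _ = ∑' p : u, d * ν (ball p.1.1 (4 * p.1.2)) := ENNReal.tsum_mul_left.symm
        _ ≤ ∑' p : u, A ^ 2 * ∫⁻ y in ball p.1.1 p.1.2, F y ∂ν :=
            ENNReal.tsum_le_tsum fun p => hball p.1 p.2
        _ = A ^ 2 * ∑' p : u, ∫⁻ y in ball p.1.1 p.1.2, F y ∂ν := ENNReal.tsum_mul_left
        _ = A ^ 2 * ∫⁻ y in ⋃ p ∈ u, ball p.1 p.2, F y ∂ν := by
            rw [lintegral_biUnion huc (fun p _ => measurableSet_ball) hdis]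
        _ ≤ A ^ 2 * ∫⁻ y in ball z s, F y ∂ν := by
            gcongr
            refine Set.iUnion₂_subset fun p hp => ball_subset_ball' ?_
            obtain ⟨h1, h2, h3, h4⟩ := huT hp
            rw [mem_closedBall] at h1
            linarith
        _ ≤ A ^ 2 * (d * d * (A ^ 7 * M)) := by
            gcongr
            refine hint.trans ?_
            rw [hdd]
            gcongr
        _ = _ := by ring
    exact (ENNReal.mul_le_mul_iff_right hd0 hdt).1 key
  refine ⟨closedBall z (s / 100) \ U, Set.sdiff_subset,
    (isCompact_closedBall z _).diff hUo, ?_, ?_⟩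
  · rw [ENNReal.ofReal_sub _ (by positivity), hC, ENNReal.ofReal_one,
      ENNReal.sub_mul (fun _ _ => hMt), one_mul, tsub_le_iff_right]
    calc M ≤ ν ((closedBall z (s / 100) \ U) ∪ U) := by
          apply measure_mono
          rw [Set.sdiff_union_self]
          exact ball_subset_closedBall.trans Set.subset_union_left
      _ ≤ _ := measure_union_le _ _
      _ ≤ _ := by gcongr
  · intro x hx t ht hts
    rw [hC]
    by_contra hcon
    push Not at hcon
    refine hx.2 (Set.mem_biUnion (x := ((x, t) : X × ℝ)) ⟨hx.1, ht, hts, ?_⟩ (mem_ball_self ht))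
    refine le_trans ?_ hcon.le
    have : d ≤ A ^ 9 * d := le_mul_of_one_le_left zero_le (one_le_pow₀ hA1)
    gcongr
end

section
/- Let k, l ∈ ℕ with k ≥ 1 and let f_1, …, f_k : ℝ^l → ℝ be Lipschitz functions; by Rademacher's theorem each f_i is differentiable at Lebesgue-almost every point, and ∇f_i denotes its almost-everywhere defined gradient. Suppose ε ≥ 0 satisfies 2·k^3·ε < 1 and that for all 1 ≤ i, j ≤ k the averaged integral (1/L^l(B_1(0))) ∫_{B_1(0)} |⟨∇f_i(x), ∇f_j(x)⟩ − δ_{ij}| dL^l(x) ≤ ε, where L^l is the l-dimensional Lebesgue measure and B_1(0) ⊂ ℝ^l is the open unit ball. Then k ≤ l. -/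
open MeasureTheory Metric
open scoped ENNReal NNReal RealInnerProductSpace

lemma linInd_aux {k l : ℕ} (v : Fin k → EuclideanSpace ℝ (Fin l))
    (hv : ∑ i, ∑ j, |⟪v i, v j⟫ - (if i = j then (1 : ℝ) else 0)| < 1) : k ≤ l := by
  have hli : LinearIndependent ℝ v := by
    rw [Fintype.linearIndependent_iff]
    intro c hc
    have h0 : ∑ i, ∑ j, c i * c j * ⟪v i, v j⟫ = 0 := by
      have h1 : ⟪∑ i, c i • v i, ∑ i, c i • v i⟫ = 0 := by rw [hc, inner_zero_left]
      rw [← h1, sum_inner]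
      refine Finset.sum_congr rfl fun i _ => ?_
      rw [inner_sum]
      refine Finset.sum_congr rfl fun j _ => ?_
      rw [real_inner_smul_left, real_inner_smul_right]
      ring
    have hd : ∑ i, ∑ j, c i * c j * (if i = j then (1 : ℝ) else 0) = ∑ i, c i ^ 2 := by
      refine Finset.sum_congr rfl fun i _ => ?_
      simp [sq]
    have hle : ∀ i, c i ^ 2 ≤ ∑ i, c i ^ 2 := fun i =>
      Finset.single_le_sum (f := fun i => c i ^ 2) (fun i _ => sq_nonneg _) (Finset.mem_univ i)
    have key : ∑ i, c i ^ 2 ≤ (∑ i, c i ^ 2) *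
        ∑ i, ∑ j, |⟪v i, v j⟫ - (if i = j then (1 : ℝ) else 0)| := by
      calc ∑ i, c i ^ 2 = ∑ i, ∑ j, -(c i * c j) * (⟪v i, v j⟫ - (if i = j then (1 : ℝ) else 0)) := by
            simp only [mul_sub, neg_mul, Finset.sum_sub_distrib, Finset.sum_neg_distrib]
            rw [h0, hd]; ring
        _ ≤ _ := by
            rw [Finset.mul_sum]
            refine Finset.sum_le_sum fun i _ => ?_
            rw [Finset.mul_sum]
            refine Finset.sum_le_sum fun j _ => ?_
            refine (le_abs_self _).trans ?_
            rw [abs_mul]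
            refine mul_le_mul_of_nonneg_right ?_ (abs_nonneg _)
            rw [abs_le]
            constructor <;> nlinarith [hle i, hle j, sq_nonneg (c i - c j), sq_nonneg (c i + c j)]
    have hnn : 0 ≤ ∑ i, c i ^ 2 := Finset.sum_nonneg fun i _ => sq_nonneg _
    have hz : ∑ i, c i ^ 2 ≤ 0 := by
      by_contra hcon
      push Not at hcon
      nlinarith
    intro i
    have := (hle i).trans hz
    nlinarith [pow_eq_zero_iff (two_ne_zero) |>.1 (le_antisymm this (sq_nonneg (c i)))]
  simpa using hli.fintype_card_le_finrank

/-- The Euclidean core of Proposition 3.5: if `k` Lipschitz functions on `ℝ^l` have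
gradients which are almost orthonormal in an averaged sense on the unit ball,
then `k ≤ l`. -/
theorem card_le_dim_of_almost_orthonormal_gradients
    (k l : ℕ) (hk : 1 ≤ k) (f : Fin k → EuclideanSpace ℝ (Fin l) → ℝ)
    (hf : ∀ i, ∃ L : ℝ≥0, LipschitzWith L (f i))
    (ε : ℝ) (hε : 0 ≤ ε) (hkε : 2 * (k : ℝ) ^ 3 * ε < 1)
    (h : ∀ i j : Fin k,
      (∫⁻ x in ball (0 : EuclideanSpace ℝ (Fin l)) 1,
          ENNReal.ofReal
            |⟪gradient (f i) x, gradient (f j) x⟫ - (if i = j then (1 : ℝ) else 0)|)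
        ≤ ENNReal.ofReal ε * volume (ball (0 : EuclideanSpace ℝ (Fin l)) 1)) :
    k ≤ l := by
  by_contra hkl
  have hS : ∀ x, 1 ≤ ∑ i, ∑ j, |⟪gradient (f i) x, gradient (f j) x⟫ -
      (if i = j then (1 : ℝ) else 0)| := by
    intro x
    by_contra hx
    exact hkl (linInd_aux (fun i => gradient (f i) x) (not_le.1 hx))
  have hg : ∀ i, Measurable (gradient (f i)) := by
    intro i
    exact (InnerProductSpace.toDual ℝ (EuclideanSpace ℝ (Fin l))).symm.continuous.measurable.comp
      (measurable_fderiv ℝ (f i))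
  have hm : ∀ i j, Measurable fun x => ENNReal.ofReal
      |⟪gradient (f i) x, gradient (f j) x⟫ - (if i = j then (1 : ℝ) else 0)| := by
    intro i j
    have h2 := ((hg i).inner (𝕜 := ℝ) (hg j)).sub_const (if i = j then (1 : ℝ) else 0)
    exact (continuous_abs.measurable.comp h2).ennreal_ofReal
  set B := ball (0 : EuclideanSpace ℝ (Fin l)) 1
  have h1 : volume B ≤ ∑ i : Fin k, ∑ j : Fin k, ENNReal.ofReal ε * volume B := by
    calc volume B = ∫⁻ x in B, 1 := by simp
      _ ≤ ∫⁻ x in B, ∑ i, ∑ j, ENNReal.ofReal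
            |⟪gradient (f i) x, gradient (f j) x⟫ - (if i = j then (1 : ℝ) else 0)| := by
          refine lintegral_mono fun x => ?_
          have := ENNReal.ofReal_le_ofReal (hS x)
          rw [ENNReal.ofReal_one, ENNReal.ofReal_sum_of_nonneg
            (fun i _ => Finset.sum_nonneg fun j _ => abs_nonneg _)] at this
          refine this.trans (le_of_eq ?_)
          exact Finset.sum_congr rfl fun i _ =>
            ENNReal.ofReal_sum_of_nonneg (fun j _ => abs_nonneg _)
      _ = ∑ i, ∑ j, ∫⁻ x in B, ENNReal.ofReal
            |⟪gradient (f i) x, gradient (f j) x⟫ - (if i = j then (1 : ℝ) else 0)| := by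
          rw [lintegral_finsetSum _ fun i _ => Finset.measurable_sum _ fun j _ => hm i j]
          exact Finset.sum_congr rfl fun i _ => lintegral_finsetSum _ fun j _ => hm i j
      _ ≤ _ := Finset.sum_le_sum fun i _ => Finset.sum_le_sum fun j _ => h i j
  have hpos : 0 < (volume B).toReal :=
    ENNReal.toReal_pos (measure_ball_pos volume _ one_pos).ne' measure_ball_lt_top.ne
  have hfin : volume B ≠ ∞ := measure_ball_lt_top.ne
  have h2 := ENNReal.toReal_mono (by simp; finiteness) h1
  simp [ENNReal.toReal_ofReal hε] at h2
  have hk' : (1 : ℝ) ≤ k := by exact_mod_cast hk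
  have h3 : (k : ℝ) * (k * ε) < 1 := by
    have : (k : ℝ) ^ 2 * ε ≤ k ^ 3 * ε := by gcongr; norm_num
    nlinarith [mul_nonneg (pow_nonneg (zero_le_one.trans hk') 3) hε]
  change (volume B).toReal ≤ k * (k * (ε * (volume B).toReal)) at h2
  nlinarith
end
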